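/- In the quandle ring Z[Core(Z)], for any nonzero element u with minimal support index m and maximal support index M with m < M, the square u² has minimal support index 2m - M and maximal support index 2M - m; in particular u² ≠ u. -/

import Mathlib

/-- Product on the quandle ring ℤ[Core(ℤ)]: e_a · e_b = e_{2b-a}. -/
noncomputable def coreMul (u v : ℤ →₀ ℤ) : ℤ →₀ ℤ :=
  u.sum fun a α => v.sum fun b β => Finsupp.single (2 * b - a) (α * β)

/-!
The index `2 * b - a` of `e_a · e_b` decreases strictly in `a` and increases strictly in `b`.
Hence its smallest value on a product of supports is attained only by the largest `a` paired with
the smallest `b`, and its largest value only by the smallest `a` paired with the largest `b`. No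
cancellation can occur at these two extreme indices, so their coefficients are products of two
nonzero integers. An idempotent `u` would thus satisfy `2 * M - m = M`, that is, `m = M`.
-/

section MinMax

variable {α : Type*} [LinearOrder α] {s : Finset α} {a : α}

theorem min_eq_coe_iff_isLeast : s.min = a ↔ IsLeast (s : Set α) a where
  mp h := ⟨Finset.mem_of_min h, fun _ hb => Finset.min_le_of_eq hb h⟩
  mpr h := le_antisymm (Finset.min_le h.1) (Finset.le_min fun _ hb => WithTop.coe_le_coe.2 (h.2 hb))

theorem max_eq_coe_iff_isGreatest : s.max = a ↔ IsGreatest (s : Set α) a where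
  mp h := ⟨Finset.mem_of_max h, fun _ hb => Finset.le_max_of_eq hb h⟩
  mpr h := le_antisymm (Finset.max_le fun _ hb => WithBot.coe_le_coe.2 (h.2 hb)) (Finset.le_max h.1)

end MinMax

section CoreMul

variable {u v : ℤ →₀ ℤ}

theorem coreMul_apply (u v : ℤ →₀ ℤ) (k : ℤ) :
    coreMul u v k = ∑ a ∈ u.support, ∑ b ∈ v.support, if 2 * b - a = k then u a * v b else 0 := by
  simp only [coreMul, Finsupp.sum, Finsupp.finsetSum_apply, Finsupp.single_apply]

theorem exists_of_mem_support_coreMul {k : ℤ} (hk : k ∈ (coreMul u v).support) :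
    ∃ a ∈ u.support, ∃ b ∈ v.support, 2 * b - a = k := by
  rw [Finsupp.mem_support_iff, coreMul_apply] at hk
  obtain ⟨a, ha, hsum⟩ := Finset.exists_ne_zero_of_sum_ne_zero hk
  obtain ⟨b, hb, hterm⟩ := Finset.exists_ne_zero_of_sum_ne_zero hsum
  exact ⟨a, ha, b, hb, (ite_ne_right_iff.1 hterm).1⟩

theorem coreMul_apply_of_unique {a₀ b₀ : ℤ} (ha₀ : a₀ ∈ u.support) (hb₀ : b₀ ∈ v.support)
    (huniq : ∀ a ∈ u.support, ∀ b ∈ v.support, 2 * b - a = 2 * b₀ - a₀ → a = a₀ ∧ b = b₀) :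
    coreMul u v (2 * b₀ - a₀) = u a₀ * v b₀ := by
  rw [coreMul_apply, Finset.sum_eq_single_of_mem a₀ ha₀, Finset.sum_eq_single_of_mem b₀ hb₀,
    if_pos rfl]
  · exact fun b hb hne => if_neg fun h => hne (huniq a₀ ha₀ b hb h).2
  · exact fun a ha hne =>
      Finset.sum_eq_zero fun b hb => if_neg fun h => hne (huniq a ha b hb h).1

theorem mem_support_coreMul_of_unique {a₀ b₀ : ℤ} (ha₀ : a₀ ∈ u.support) (hb₀ : b₀ ∈ v.support)
    (huniq : ∀ a ∈ u.support, ∀ b ∈ v.support, 2 * b - a = 2 * b₀ - a₀ → a = a₀ ∧ b = b₀) :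
    2 * b₀ - a₀ ∈ (coreMul u v).support := by
  rw [Finsupp.mem_support_iff, coreMul_apply_of_unique ha₀ hb₀ huniq]
  exact mul_ne_zero (Finsupp.mem_support_iff.1 ha₀) (Finsupp.mem_support_iff.1 hb₀)

theorem isLeast_support_coreMul {a₀ b₀ : ℤ} (hu : IsGreatest (u.support : Set ℤ) a₀)
    (hv : IsLeast (v.support : Set ℤ) b₀) :
    IsLeast ((coreMul u v).support : Set ℤ) (2 * b₀ - a₀) := by
  refine ⟨mem_support_coreMul_of_unique hu.1 hv.1 fun a ha b hb h => ?_, fun k hk => ?_⟩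
  · have hab : a ≤ a₀ ∧ b₀ ≤ b := ⟨hu.2 ha, hv.2 hb⟩
    omega
  · obtain ⟨a, ha, b, hb, rfl⟩ := exists_of_mem_support_coreMul hk
    have hab : a ≤ a₀ ∧ b₀ ≤ b := ⟨hu.2 ha, hv.2 hb⟩
    omega

theorem isGreatest_support_coreMul {a₀ b₀ : ℤ} (hu : IsLeast (u.support : Set ℤ) a₀)
    (hv : IsGreatest (v.support : Set ℤ) b₀) :
    IsGreatest ((coreMul u v).support : Set ℤ) (2 * b₀ - a₀) := by
  refine ⟨mem_support_coreMul_of_unique hu.1 hv.1 fun a ha b hb h => ?_, fun k hk => ?_⟩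
  · have hab : a₀ ≤ a ∧ b ≤ b₀ := ⟨hu.2 ha, hv.2 hb⟩
    omega
  · obtain ⟨a, ha, b, hb, rfl⟩ := exists_of_mem_support_coreMul hk
    have hab : a₀ ≤ a ∧ b ≤ b₀ := ⟨hu.2 ha, hv.2 hb⟩
    omega

theorem coreMul_self_ne {m M : ℤ} (hm : IsLeast (u.support : Set ℤ) m)
    (hM : IsGreatest (u.support : Set ℤ) M) (hlt : m < M) : coreMul u u ≠ u := by
  intro hidem
  have hsq : IsGreatest (u.support : Set ℤ) (2 * M - m) := by
    simpa only [hidem] using isGreatest_support_coreMul hm hM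
  have hMm : 2 * M - m = M := hsq.unique hM
  omega

end CoreMul

/-- For a nonzero u ∈ ℤ[Core(ℤ)] with minimal support index m and maximal
support index M, m < M, the square u² has minimal support index 2m - M and
maximal support index 2M - m; in particular u² ≠ u. -/
theorem stmt1 (u : ℤ →₀ ℤ) (hu : u ≠ 0) (m M : ℤ)
    (hm : (u.support.min : WithBot ℤ) = (m : ℤ))
    (hM : (u.support.max : WithTop ℤ) = (M : ℤ))
    (hlt : m < M) :
    ((coreMul u u).support.min : WithBot ℤ) = ((2 * m - M : ℤ) : WithBot ℤ) ∧
    ((coreMul u u).support.max : WithTop ℤ) = ((2 * M - m : ℤ) : WithTop ℤ) ∧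
    coreMul u u ≠ u := by
  -- In the goal the ascriptions swap the casts: `min` is equated with a `WithBot.some` and `max`
  -- with a `WithTop.some`. The two `iff`s still apply, since both casts unfold to `Option.some`.
  have hleast : IsLeast (u.support : Set ℤ) m := min_eq_coe_iff_isLeast.1 hm
  have hgreatest : IsGreatest (u.support : Set ℤ) M := max_eq_coe_iff_isGreatest.1 hM
  exact ⟨min_eq_coe_iff_isLeast.2 (isLeast_support_coreMul hgreatest hleast),
    max_eq_coe_iff_isGreatest.2 (isGreatest_support_coreMul hleast hgreatest),
    coreMul_self_ne hleast hgreatest hlt⟩
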